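/- For the uniform-mesh mixed MUSCL–Trapezoidal scheme with forward-difference slopes, the corrected grid function w̄_i^n = s̄_i^n + γ_i^n with γ_0^n = -(λ²/2)h² s_xx(t^n,x_0) on the implicit cell 0 and γ_i^n = 0 elsewhere has a uniformly third-order one-step error: L(w̄^n, w̄^{n+1})_i = O(h³) for all cells i. -/

import Mathlib

open Filter Asymptotics Topology intervalIntegral

/-- Exact cell average of `s(t,·)` over the cell of width `h` centered at `x`. -/
noncomputable def cellAvg (s : ℝ → ℝ → ℝ) (h t x : ℝ) : ℝ :=
  (1/h) * ∫ y in (x - h/2)..(x + h/2), s t y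

/-- One-step error functional `L(Wn,Wp)_i = Φ(Wn,Wp)_i - Wp_i` of the mixed
MUSCL–Trapezoidal scheme on a uniform mesh (forward-difference slopes, trapezoidal
fluxes at edges `-1/2` and `1/2`, MUSCL fluxes elsewhere, `Δt = λh/u`), applied to
arbitrary grid functions `Wn` (at `t^n`) and `Wp` (at `t^{n+1}`). -/
noncomputable def mixedSchemeL (u lam h : ℝ) (Wn Wp : ℤ → ℝ) (i : ℤ) : ℝ :=
  let σn := fun (j : ℤ) => (Wn (j+1) - Wn j) / h
  let σp := fun (j : ℤ) => (Wp (j+1) - Wp j) / h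
  let FM := fun (j : ℤ) => u * (Wn j + (1 - lam) * σn j * (h/2))
  let FT := fun (j : ℤ) =>
    (u/2) * (Wn j + σn j * (h/2) + Wp j + σp j * (h/2))
  let flux := fun (j : ℤ) => if j = -1 ∨ j = 0 then FT j else FM j
  Wn i - ((lam * h / u) / h) * (flux i - flux (i-1)) - Wp i

/-- The corrected grid function `w̄_i = s̄_i + γ_i` at time `t`, with
`γ_0 = -(λ²/2) h² s_xx(t, x_0)` on the implicit cell `0` and `γ_i = 0` elsewhere. -/
noncomputable def correctedGrid (s : ℝ → ℝ → ℝ) (lam x0 h t : ℝ) (i : ℤ) : ℝ :=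
  cellAvg s h t (x0 + (i : ℝ) * h)
    + (if i = 0 then -(lam^2/2) * h^2 * iteratedDeriv 2 (s t) x0 else 0)

/-!
The scheme is exact on the corrected averages of travelling quadratics: the cell averages of a
quadratic carry the constant defect `c h²/24`, which differences do not see, and the constant
correction `-(λ²/2) h² c` on cell `0` compensates the second-order mismatch between the trapezoidal
fluxes at the edges `±1/2` and the MUSCL fluxes at the edges `±3/2`. A solution of
`s_t + u s_x = 0` is a travelling wave, and on the stencil of cell `i` its profile agrees up to
`O(h³)` with the Taylor quadratic at `x_i`, the second derivatives up to `O(h)`. Since the one-step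
error is a linear functional of the grid values on that stencil, with coefficients bounded in terms
of `λ` alone, it is `O(h³)` uniformly in `i`.
-/

section Taylor

theorem abs_sub_taylorWithinEval_univ_le {f : ℝ → ℝ} {n : ℕ} {M : ℝ}
    (hf : ContDiff ℝ (n + 1) f) (hM : ∀ x, |iteratedDeriv (n + 1) f x| ≤ M) (z y : ℝ) :
    |f y - taylorWithinEval f n Set.univ z y| ≤ M * |y - z| ^ (n + 1) / (n + 1).factorial := by
  rcases eq_or_ne z y with rfl | hzy
  · simp
  have taylor_eq :
      taylorWithinEval f n Set.univ z y = taylorWithinEval f n (Set.uIcc z y) z y := by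
    simp only [taylor_within_apply, iteratedDerivWithin_univ]
    refine Finset.sum_congr rfl fun k hk => ?_
    have hkn : (k : WithTop ℕ∞) ≤ n + 1 := by
      exact_mod_cast (Finset.mem_range.1 hk).le
    rw [iteratedDerivWithin_eq_iteratedDeriv (uniqueDiffOn_uIcc hzy)
      (hf.contDiffAt.of_le hkn) Set.left_mem_uIcc]
  obtain ⟨x', -, hx'⟩ := taylor_mean_remainder_lagrange_iteratedDeriv hzy hf.contDiffOn
  rw [taylor_eq, hx', abs_div, abs_mul, abs_pow, Nat.abs_cast]
  gcongr
  exact hM x'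

/-- The quadratic polynomial with value `a`, slope `b` and second derivative `c` at `z`. -/
noncomputable def quadraticAt (z a b c y : ℝ) : ℝ :=
  a + b * (y - z) + c / 2 * (y - z) ^ 2

theorem continuous_quadraticAt (z a b c : ℝ) : Continuous (quadraticAt z a b c) := by
  unfold quadraticAt
  fun_prop

theorem hasDerivAt_quadraticAt (z a b c y : ℝ) :
    HasDerivAt (quadraticAt z a b c) (b + c * (y - z)) y := by
  have hsub : HasDerivAt (fun y => y - z) 1 y := (hasDerivAt_id y).sub_const z
  refine (((hsub.const_mul b).const_add a).add ((hsub.pow 2).const_mul (c / 2))).congr_deriv ?_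
  simp only [Nat.cast_ofNat]
  ring

theorem iteratedDeriv_two_quadraticAt (z a b c y : ℝ) :
    iteratedDeriv 2 (quadraticAt z a b c) y = c := by
  have hderiv : deriv (quadraticAt z a b c) = fun y => b + c * (y - z) :=
    funext fun y => (hasDerivAt_quadraticAt z a b c y).deriv
  have hsub : HasDerivAt (fun y => y - z) 1 y := (hasDerivAt_id y).sub_const z
  rw [iteratedDeriv_succ, iteratedDeriv_one, hderiv, ((hsub.const_mul c).const_add b).deriv,
    mul_one]

theorem taylorWithinEval_two_univ (f : ℝ → ℝ) (z y : ℝ) :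
    taylorWithinEval f 2 Set.univ z y =
      quadraticAt z (f z) (deriv f z) (iteratedDeriv 2 f z) y := by
  simp only [taylor_within_apply, iteratedDerivWithin_univ, Finset.sum_range_succ,
    Finset.sum_range_zero, iteratedDeriv_zero, iteratedDeriv_one, smul_eq_mul, quadraticAt,
    Nat.factorial, Nat.cast_one]
  push_cast
  ring

variable {f : ℝ → ℝ} {M : ℝ}

theorem abs_sub_quadraticAt_le (hf : ContDiff ℝ 3 f) (hM : ∀ x, |iteratedDeriv 3 f x| ≤ M)
    (z y : ℝ) :
    |f y - quadraticAt z (f z) (deriv f z) (iteratedDeriv 2 f z) y| ≤ M * |y - z| ^ 3 / 6 := by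
  have := abs_sub_taylorWithinEval_univ_le (n := 2) (by norm_num; exact hf) hM z y
  rwa [taylorWithinEval_two_univ] at this

theorem abs_iteratedDeriv_two_sub_le (hf : ContDiff ℝ 3 f) (hM : ∀ x, |iteratedDeriv 3 f x| ≤ M)
    (z y : ℝ) : |iteratedDeriv 2 f y - iteratedDeriv 2 f z| ≤ M * |y - z| :=
  Convex.norm_image_sub_le_of_norm_deriv_le (s := Set.univ)
    (fun x _ => hf.differentiable_iteratedDeriv 2 (by norm_num) x)
    (fun x _ => by rw [← iteratedDeriv_succ]; exact hM x) convex_univ trivial trivial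

end Taylor

section Transport

/-- The wave with profile `f` at time `t₀` travelling with velocity `u`, as a function of time and
space. -/
def travelingWave (u t₀ : ℝ) (f : ℝ → ℝ) (t x : ℝ) : ℝ :=
  f (x - u * (t - t₀))

variable {u t₀ : ℝ} {f : ℝ → ℝ}

theorem continuous_travelingWave (hf : Continuous f) (t : ℝ) :
    Continuous (travelingWave u t₀ f t) :=
  hf.comp (continuous_id.sub continuous_const)

theorem iteratedDeriv_travelingWave (n : ℕ) (t x : ℝ) :
    iteratedDeriv n (travelingWave u t₀ f t) x = iteratedDeriv n f (x - u * (t - t₀)) :=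
  congrFun (iteratedDeriv_comp_sub_const n f (u * (t - t₀))) x

theorem travelingWave_quadraticAt (z a b c t : ℝ) :
    travelingWave u t₀ (quadraticAt z a b c) t = quadraticAt (z + u * (t - t₀)) a b c := by
  funext x
  simp only [travelingWave, quadraticAt]
  ring

variable {s : ℝ → ℝ → ℝ}

theorem hasDerivAt_along_characteristic (hs : Differentiable ℝ (Function.uncurry s))
    (hpde : ∀ t x : ℝ, deriv (fun τ => s τ x) t + u * deriv (fun y => s t y) x = 0) (x t : ℝ) :
    HasDerivAt (fun τ => s τ (x + u * τ)) 0 t := by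
  have hF := (hs (t, x + u * t)).hasFDerivAt
  set D := fderiv ℝ (Function.uncurry s) (t, x + u * t)
  have h_time : HasDerivAt (fun τ => s τ (x + u * t)) (D (1, 0)) t :=
    hF.comp_hasDerivAt_of_eq t ((hasDerivAt_id t).prodMk (hasDerivAt_const t (x + u * t))) rfl
  have h_space : HasDerivAt (fun y => s t y) (D (0, 1)) (x + u * t) :=
    hF.comp_hasDerivAt (x + u * t) ((hasDerivAt_const _ t).prodMk (hasDerivAt_id _))
  have h_line : HasDerivAt (fun τ => (τ, x + u * τ)) ((1 : ℝ), u) t :=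
    (hasDerivAt_id t).prodMk (by simpa using ((hasDerivAt_id t).const_mul u).const_add x)
  have h_direction : D (1, u) = 0 := by
    have h_split : ((1 : ℝ), u) = (1, 0) + u • ((0 : ℝ), (1 : ℝ)) := by simp
    rw [h_split, map_add, map_smul, smul_eq_mul, ← h_time.deriv, ← h_space.deriv, hpde]
  exact (hF.comp_hasDerivAt t h_line).congr_deriv h_direction

theorem eq_travelingWave_of_transport (hs : Differentiable ℝ (Function.uncurry s))
    (hpde : ∀ t x : ℝ, deriv (fun τ => s τ x) t + u * deriv (fun y => s t y) x = 0) (t₀ : ℝ) :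
    s = travelingWave u t₀ (s t₀) := by
  funext t x
  have h_char := hasDerivAt_along_characteristic hs hpde (x - u * t)
  have h_const := is_const_of_deriv_eq_zero (fun τ => (h_char τ).differentiableAt)
    (fun τ => (h_char τ).deriv) t t₀
  rw [sub_add_cancel] at h_const
  rw [h_const, travelingWave]
  congr 1
  ring

end Transport

section CellAverages

variable {s r : ℝ → ℝ → ℝ} {lam x0 h t x : ℝ}

theorem abs_cellAvg_sub_le {ε : ℝ} (hh : 0 < h) (hs : Continuous (s t)) (hr : Continuous (r t))
    (hε : ∀ y, |y - x| ≤ h / 2 → |s t y - r t y| ≤ ε) :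
    |cellAvg s h t x - cellAvg r h t x| ≤ ε := by
  have h_integral : |∫ y in (x - h / 2)..(x + h / 2), (s t y - r t y)| ≤ ε * h := by
    have h_bound : ∀ y ∈ Set.uIoc (x - h / 2) (x + h / 2), ‖s t y - r t y‖ ≤ ε := fun y hy => by
      rw [Set.uIoc_of_le (by linarith)] at hy
      exact hε y (abs_le.2 ⟨by linarith [hy.1], by linarith [hy.2]⟩)
    have := norm_integral_le_of_norm_le_const h_bound
    rwa [add_sub_sub_cancel, add_halves, abs_of_pos hh] at this
  rw [cellAvg, cellAvg, ← mul_sub, ← integral_sub (hs.intervalIntegrable _ _)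
    (hr.intervalIntegrable _ _), abs_mul, abs_of_pos (one_div_pos.2 hh), one_div_mul_eq_div]
  exact (div_le_iff₀ hh).2 h_integral

theorem abs_correctedGrid_sub_le {ε₀ ε₂ : ℝ} {j : ℤ} (hh : 0 < h) (hs : Continuous (s t))
    (hr : Continuous (r t)) (hε₀ : ∀ y, |y - (x0 + j * h)| ≤ h / 2 → |s t y - r t y| ≤ ε₀)
    (hε₂ : |iteratedDeriv 2 (s t) (x0 + j * h) - iteratedDeriv 2 (r t) (x0 + j * h)| ≤ ε₂) :
    |correctedGrid s lam x0 h t j - correctedGrid r lam x0 h t j| ≤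
      ε₀ + lam ^ 2 / 2 * h ^ 2 * ε₂ := by
  have h_avg := abs_cellAvg_sub_le hh hs hr hε₀
  rw [correctedGrid, correctedGrid, add_sub_add_comm]
  refine (abs_add_le _ _).trans (add_le_add h_avg ?_)
  rcases eq_or_ne j 0 with rfl | hj
  · rw [Int.cast_zero, zero_mul, add_zero] at hε₂
    rw [if_pos rfl, if_pos rfl, ← mul_sub, abs_mul, neg_mul, abs_neg, abs_of_nonneg (by positivity)]
    gcongr
  · have hε₂_nonneg := (abs_nonneg _).trans hε₂
    rw [if_neg hj, if_neg hj, sub_zero, abs_zero]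
    positivity

theorem cellAvg_of_eq_quadraticAt {z a b c : ℝ} (hh : h ≠ 0) (hs : s t = quadraticAt z a b c) :
    cellAvg s h t x = quadraticAt z a b c x + c * h ^ 2 / 24 := by
  let P : ℝ → ℝ := fun y => a * (y - z) + b / 2 * (y - z) ^ 2 + c / 6 * (y - z) ^ 3
  have hP : ∀ y, HasDerivAt P (quadraticAt z a b c y) y := fun y => by
    have hsub : HasDerivAt (fun y => y - z) 1 y := (hasDerivAt_id y).sub_const z
    refine (((hsub.const_mul a).add ((hsub.pow 2).const_mul (b / 2))).add
      ((hsub.pow 3).const_mul (c / 6))).congr_deriv ?_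
    simp only [quadraticAt, Nat.cast_ofNat]
    ring
  rw [cellAvg, hs, integral_eq_sub_of_hasDerivAt (fun y _ => hP y)
    ((continuous_quadraticAt z a b c).intervalIntegrable _ _)]
  simp only [P, quadraticAt]
  field_simp
  ring

theorem correctedGrid_of_eq_quadraticAt {z a b c : ℝ} (hh : h ≠ 0)
    (hs : s t = quadraticAt z a b c) (j : ℤ) :
    correctedGrid s lam x0 h t j = quadraticAt z a b c (x0 + j * h) + c * h ^ 2 / 24 +
      if j = 0 then -(lam ^ 2 / 2) * h ^ 2 * c else 0 := by
  rw [correctedGrid, cellAvg_of_eq_quadraticAt hh hs, hs, iteratedDeriv_two_quadraticAt]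

end CellAverages

section Scheme

/-- The numerical flux of the mixed scheme through the edge `j + 1/2`, divided by the velocity:
trapezoidal at the edges `-1/2` and `1/2`, MUSCL elsewhere. -/
noncomputable def mixedFlux (lam : ℝ) (Wn Wp : ℤ → ℝ) (j : ℤ) : ℝ :=
  if j = -1 ∨ j = 0 then (Wn j + Wn (j + 1) + Wp j + Wp (j + 1)) / 4
  else (1 + lam) / 2 * Wn j + (1 - lam) / 2 * Wn (j + 1)

variable {u lam h : ℝ}

theorem mixedSchemeL_eq (hu : u ≠ 0) (hh : h ≠ 0) (Wn Wp : ℤ → ℝ) (i : ℤ) :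
    mixedSchemeL u lam h Wn Wp i =
      Wn i - Wp i - lam * (mixedFlux lam Wn Wp i - mixedFlux lam Wn Wp (i - 1)) := by
  simp only [mixedSchemeL, mixedFlux, sub_add_cancel]
  split_ifs <;> field_simp <;> ring

theorem mixedFlux_sub (Wn Wp Vn Vp : ℤ → ℝ) (j : ℤ) :
    mixedFlux lam (Wn - Vn) (Wp - Vp) j = mixedFlux lam Wn Wp j - mixedFlux lam Vn Vp j := by
  simp only [mixedFlux, Pi.sub_apply]
  split_ifs <;> ring

theorem abs_mixedFlux_le {Wn Wp : ℤ → ℝ} {ε : ℝ} {j : ℤ} (hn : |Wn j| ≤ ε)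
    (hn' : |Wn (j + 1)| ≤ ε) (hp : |Wp j| ≤ ε) (hp' : |Wp (j + 1)| ≤ ε) :
    |mixedFlux lam Wn Wp j| ≤ (1 + |lam|) * ε := by
  have hε : 0 ≤ ε := (abs_nonneg _).trans hn
  rw [mixedFlux]
  split_ifs
  · have h_mean : |(Wn j + Wn (j + 1) + Wp j + Wp (j + 1)) / 4| ≤ ε := by
      rw [abs_le] at *
      constructor <;> linarith
    exact h_mean.trans (le_mul_of_one_le_left hε (by linarith [abs_nonneg lam]))
  · have h_left : |(1 + lam) / 2| ≤ (1 + |lam|) / 2 := by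
      rw [abs_div, abs_two]
      gcongr
      simpa using abs_add_le 1 lam
    have h_right : |(1 - lam) / 2| ≤ (1 + |lam|) / 2 := by
      rw [abs_div, abs_two]
      gcongr
      simpa using abs_sub 1 lam
    calc |(1 + lam) / 2 * Wn j + (1 - lam) / 2 * Wn (j + 1)|
        ≤ |(1 + lam) / 2| * |Wn j| + |(1 - lam) / 2| * |Wn (j + 1)| := by
          simpa only [abs_mul] using abs_add_le ((1 + lam) / 2 * Wn j) ((1 - lam) / 2 * Wn (j + 1))
      _ ≤ (1 + |lam|) / 2 * ε + (1 + |lam|) / 2 * ε := by gcongr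
      _ = (1 + |lam|) * ε := by ring

theorem abs_mixedSchemeL_sub_le (hu : u ≠ 0) (hh : h ≠ 0) {Wn Wp Vn Vp : ℤ → ℝ} {ε : ℝ} {i : ℤ}
    (hn : ∀ j, |j - i| ≤ 1 → |Wn j - Vn j| ≤ ε) (hp : ∀ j, |j - i| ≤ 1 → |Wp j - Vp j| ≤ ε) :
    |mixedSchemeL u lam h Wn Wp i - mixedSchemeL u lam h Vn Vp i| ≤
      2 * (1 + |lam| + lam ^ 2) * ε := by
  have h_flux : ∀ j, |j - i| ≤ 1 → |j + 1 - i| ≤ 1 →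
      |mixedFlux lam (Wn - Vn) (Wp - Vp) j| ≤ (1 + |lam|) * ε := fun j hj hj' =>
    abs_mixedFlux_le (hn j hj) (hn (j + 1) hj') (hp j hj) (hp (j + 1) hj')
  have h_right := h_flux i (by simp) (by simp)
  have h_left := h_flux (i - 1) (by simp) (by simp)
  have h_center_n := hn i (by simp)
  have h_center_p := hp i (by simp)
  rw [mixedFlux_sub] at h_right h_left
  set Fr := mixedFlux lam Wn Wp i - mixedFlux lam Vn Vp i
  set Fl := mixedFlux lam Wn Wp (i - 1) - mixedFlux lam Vn Vp (i - 1)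
  calc |mixedSchemeL u lam h Wn Wp i - mixedSchemeL u lam h Vn Vp i|
      = |(Wn i - Vn i) - (Wp i - Vp i) - lam * (Fr - Fl)| := by
        rw [mixedSchemeL_eq hu hh, mixedSchemeL_eq hu hh]
        congr 1
        ring
    _ ≤ |Wn i - Vn i| + |Wp i - Vp i| + |lam| * (|Fr| + |Fl|) := by
        grw [abs_sub (_ - _ - _), abs_sub (Wn i - Vn i), abs_mul, abs_sub Fr]
    _ ≤ ε + ε + |lam| * ((1 + |lam|) * ε + (1 + |lam|) * ε) := by gcongr
    _ = 2 * (1 + |lam| + lam ^ 2) * ε := by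
        rw [← sq_abs lam]
        ring

end Scheme

section OneStepError

variable {u lam h : ℝ}

theorem mixedSchemeL_correctedGrid_quadraticAt (hu : u ≠ 0) (hh : h ≠ 0) (tn x0 z a b c : ℝ)
    (i : ℤ) :
    mixedSchemeL u lam h
      (correctedGrid (travelingWave u tn (quadraticAt z a b c)) lam x0 h tn)
      (correctedGrid (travelingWave u tn (quadraticAt z a b c)) lam x0 h (tn + lam * h / u)) i =
        0 := by
  have h_shift : u * (tn + lam * h / u - tn) = lam * h := by
    rw [add_sub_cancel_left, mul_div_cancel₀ _ hu]
  rw [mixedSchemeL_eq hu hh]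
  simp only [mixedFlux, sub_add_cancel, h_shift, quadraticAt,
    correctedGrid_of_eq_quadraticAt hh (travelingWave_quadraticAt z a b c _)]
  have h_cells : i = -1 ∨ i = 0 ∨ i = 1 ∨
      (i ≠ -1 ∧ i ≠ 0 ∧ i - 1 ≠ -1 ∧ i - 1 ≠ 0 ∧ i + 1 ≠ 0) := by omega
  rcases h_cells with rfl | rfl | rfl | ⟨h₁, h₂, h₃, h₄, h₅⟩
  iterate 3
    · simp only [Int.reduceNeg, Int.reduceAdd, Int.reduceSub, Int.reduceEq, reduceIte, or_true,
        true_or, or_self]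
      push_cast
      ring
  · simp only [if_neg h₂, if_neg h₄, if_neg h₅, if_neg (not_or.2 ⟨h₁, h₂⟩),
      if_neg (not_or.2 ⟨h₃, h₄⟩)]
    push_cast
    ring

theorem abs_correctedGrid_sub_quadraticAt_le {f : ℝ → ℝ} {M t₀ t x0 : ℝ} {i j : ℤ} (hh : 0 < h)
    (hf : ContDiff ℝ 3 f) (hM : ∀ x, |iteratedDeriv 3 f x| ≤ M)
    (ht : |u * (t - t₀)| ≤ |lam| * h) (hj : |j - i| ≤ 1) {z : ℝ} (hz : z = x0 + i * h) :
    |correctedGrid (travelingWave u t₀ f) lam x0 h t j -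
      correctedGrid (travelingWave u t₀
        (quadraticAt z (f z) (deriv f z) (iteratedDeriv 2 f z))) lam x0 h t j| ≤
      ((2 + |lam|) ^ 3 / 6 + lam ^ 2 * (2 + |lam|) / 2) * M * h ^ 3 := by
  have hM_nonneg : 0 ≤ M := (abs_nonneg _).trans (hM 0)
  have h_cell : |(x0 + j * h) - z| ≤ h := by
    have hj' : |(j - i : ℝ)| ≤ 1 := by exact_mod_cast hj
    rw [hz, add_sub_add_left_eq_sub, ← sub_mul, abs_mul, abs_of_pos hh]
    exact mul_le_of_le_one_left hh.le hj'
  have h_near : ∀ y, |y - (x0 + j * h)| ≤ h / 2 →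
      |y - u * (t - t₀) - z| ≤ (2 + |lam|) * h := fun y hy => by
    rw [abs_le] at *
    constructor <;> linarith
  refine (abs_correctedGrid_sub_le (ε₀ := M * ((2 + |lam|) * h) ^ 3 / 6)
    (ε₂ := M * ((2 + |lam|) * h)) hh (continuous_travelingWave hf.continuous t)
    (continuous_travelingWave (continuous_quadraticAt _ _ _ _) t) (fun y hy => ?_) ?_).trans_eq
    (by ring)
  · refine (abs_sub_quadraticAt_le hf hM z _).trans ?_
    gcongr
    exact h_near y hy
  · rw [iteratedDeriv_travelingWave, iteratedDeriv_travelingWave, iteratedDeriv_two_quadraticAt]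
    refine (abs_iteratedDeriv_two_sub_le hf hM z _).trans ?_
    gcongr
    exact h_near _ (by rw [sub_self, abs_zero]; positivity)

theorem corrected_grid_one_step_third_order_general {s : ℝ → ℝ → ℝ} {tn M : ℝ} (hu : u ≠ 0)
    (hs : Differentiable ℝ (Function.uncurry s)) (hsn : ContDiff ℝ 3 (s tn))
    (hpde : ∀ t x : ℝ, deriv (fun τ => s τ x) t + u * deriv (fun y => s t y) x = 0)
    (hM : ∀ x, |iteratedDeriv 3 (s tn) x| ≤ M) (hh : 0 < h) (x0 : ℝ) (i : ℤ) :
    |mixedSchemeL u lam h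
        (correctedGrid s lam x0 h tn)
        (correctedGrid s lam x0 h (tn + lam * h / u)) i| ≤
      2 * (1 + |lam| + lam ^ 2) *
        ((2 + |lam|) ^ 3 / 6 + lam ^ 2 * (2 + |lam|) / 2) * M * h ^ 3 := by
  have h_old : |u * (tn - tn)| ≤ |lam| * h := by
    rw [sub_self, mul_zero, abs_zero]
    positivity
  have h_new : |u * (tn + lam * h / u - tn)| ≤ |lam| * h := by
    rw [add_sub_cancel_left, mul_div_cancel₀ _ hu, abs_mul, abs_of_pos hh]
  have h_stability := abs_mixedSchemeL_sub_le (lam := lam) hu hh.ne'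
    (fun j hj => abs_correctedGrid_sub_quadraticAt_le (x0 := x0) hh hsn hM h_old hj rfl)
    (fun j hj => abs_correctedGrid_sub_quadraticAt_le (x0 := x0) hh hsn hM h_new hj rfl)
    (i := i)
  rw [mixedSchemeL_correctedGrid_quadraticAt hu hh.ne', sub_zero,
    ← eq_travelingWave_of_transport hs hpde tn] at h_stability
  exact h_stability.trans_eq (by ring)

end OneStepError

/-- For the uniform-mesh mixed MUSCL–Trapezoidal scheme with
forward-difference slopes, the corrected grid function
`w̄_i^n = s̄_i^n + γ_i^n`, `γ_0^n = -(λ²/2)h² s_xx(t^n,x_0)` (zero elsewhere),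
has a *uniformly* third-order one-step error: `L(w̄^n, w̄^{n+1})_i = O(h³)`
for all cells `i`, uniformly in `i`. -/
theorem corrected_grid_one_step_third_order
    (s : ℝ → ℝ → ℝ) (u lam tn x0 : ℝ) (hu : 0 < u)
    (hlam : lam ∈ Set.Ioc (0:ℝ) 1)
    (hs : ContDiff ℝ (⊤ : ℕ∞) (Function.uncurry s))
    (hpde : ∀ t x : ℝ, deriv (fun τ => s τ x) t + u * deriv (fun y => s t y) x = 0)
    (hbd : ∀ k : ℕ, ∃ M : ℝ, ∀ t x : ℝ, |iteratedDeriv k (s t) x| ≤ M) :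
    ∃ C δ : ℝ, 0 < δ ∧ ∀ h : ℝ, 0 < h → h < δ → ∀ i : ℤ,
      |mixedSchemeL u lam h
          (correctedGrid s lam x0 h tn)
          (correctedGrid s lam x0 h (tn + lam * h / u)) i| ≤ C * h^3 := by
  obtain ⟨M, hM⟩ := hbd 3
  have hsn : ContDiff ℝ 3 (s tn) :=
    (contDiff_infty.1 hs 3).comp (contDiff_prodMk_right tn)
  exact ⟨_, 1, one_pos, fun h hh _ i => corrected_grid_one_step_third_order_general hu.ne'
    (hs.differentiable (by simp)) hsn hpde (hM tn) hh x0 i⟩
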